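/- arXiv:2511.21455 — 3 statements merged into one kernel-verified Lean document; each statement's English description precedes it below -/
import Mathlib

section
/- Let g be entire, not identically zero, and let gₙ → g uniformly on compact subsets of ℂ. Then the zero counting measures of gₙ converge vaguely to the zero counting measure of g (counting multiplicities). Equivalently, the map sending an entire function to its zero multiset, viewed as a locally finite atomic measure, is continuous at every entire function not identically zero. -/
open MeasureTheory Filter

/-- The multiplicity of `z` as a zero of `g`: the smallest `n` with `g⁽ⁿ⁾(z) ≠ 0`
(equal to `0` when `g z ≠ 0`). -/
noncomputable def zeroMult (g : ℂ → ℂ) (z : ℂ) : ℕ :=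
  sInf {n : ℕ | iteratedDeriv n g z ≠ 0}

/-- The zero counting measure of an entire function, counting multiplicities. -/
noncomputable def zeroMeasure (g : ℂ → ℂ) : Measure ℂ :=
  Measure.sum (fun z : ℂ => (zeroMult g z : ENNReal) • Measure.dirac z)

open Topology Metric

lemma Differentiable.analyticOrderAt_ne_top {f : ℂ → ℂ} (hf : Differentiable ℂ f) (h0 : f ≠ 0)
    (z : ℂ) : analyticOrderAt f z ≠ ⊤ := by
  intro h
  refine h0 (AnalyticOnNhd.eq_of_eventuallyEq (z₀ := z) (fun w _ => hf.analyticAt w)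
    (fun w _ => analyticAt_const) ?_)
  exact analyticOrderAt_eq_top.mp h

lemma zeroMult_eq_analyticOrderNatAt {f : ℂ → ℂ} (hf : Differentiable ℂ f) (h0 : f ≠ 0) (z : ℂ) :
    zeroMult f z = analyticOrderNatAt f z := by
  obtain ⟨h1, h2⟩ := (analyticOrderAt_eq_nat_iff_iteratedDeriv_eq_zero
    (hf.analyticAt z)).mp
    (Nat.cast_analyticOrderNatAt (hf.analyticOrderAt_ne_top h0 z)).symm
  refine le_antisymm (Nat.sInf_le h2) (le_csInf ⟨_, h2⟩ fun n hn => ?_)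
  by_contra! hlt
  exact hn (h1 n hlt)

lemma zeroMult_eq_zero {f : ℂ → ℂ} {z : ℂ} (h : f z ≠ 0) : zeroMult f z = 0 :=
  Nat.sInf_eq_zero.mpr (Or.inl (by simpa using h))

lemma zeroMeasure_apply (f : ℂ → ℂ) {s : Set ℂ} (hs : MeasurableSet s) :
    zeroMeasure f s = ∑' z, (zeroMult f z : ENNReal) * s.indicator 1 z := by
  simp [zeroMeasure, Measure.sum_apply _ hs, Measure.dirac_apply' _ hs]

lemma zeroMeasure_congr_set {f : ℂ → ℂ} {s t : Set ℂ} (hs : MeasurableSet s)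
    (ht : MeasurableSet t) (h : ∀ z, f z = 0 → (z ∈ s ↔ z ∈ t)) :
    zeroMeasure f s = zeroMeasure f t := by
  rw [zeroMeasure_apply f hs, zeroMeasure_apply f ht]
  refine tsum_congr fun z => ?_
  by_cases hz : f z = 0
  · by_cases hzs : z ∈ s
    · simp [hzs, (h z hz).mp hzs]
    · simp [hzs, mt (h z hz).mpr hzs]
  · simp [zeroMult_eq_zero hz]

lemma zeroMeasure_singleton (f : ℂ → ℂ) (z : ℂ) : zeroMeasure f {z} = zeroMult f z := by
  rw [zeroMeasure_apply f (measurableSet_singleton z), tsum_eq_single z]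
  · simp
  · intro w hw
    simp [hw]

/-- Zeros of a nonzero entire function are isolated. -/
lemma Differentiable.exists_ball_zero_eq {f : ℂ → ℂ} (hf : Differentiable ℂ f) (h0 : f ≠ 0)
    (z : ℂ) : ∃ r > 0, ∀ w ∈ ball z r, f w = 0 → w = z := by
  have h : ∀ᶠ w in 𝓝[≠] z, f w ≠ 0 := by
    refine (hf.analyticAt z).eventually_eq_zero_or_eventually_ne_zero.resolve_left fun h => ?_
    exact hf.analyticOrderAt_ne_top h0 z (analyticOrderAt_eq_top.mpr h)
  rw [eventually_nhdsWithin_iff] at h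
  obtain ⟨r, hr, hb⟩ := Metric.eventually_nhds_iff_ball.mp h
  exact ⟨r, hr, fun w hw hw0 => by_contra fun hne => hb w hw hne hw0⟩

lemma isLocallyFiniteMeasure_zeroMeasure {f : ℂ → ℂ} (hf : Differentiable ℂ f) (h0 : f ≠ 0) :
    IsLocallyFiniteMeasure (zeroMeasure f) := by
  refine ⟨fun z => ?_⟩
  obtain ⟨r, hr, hb⟩ := hf.exists_ball_zero_eq h0 z
  refine ⟨ball z r, ball_mem_nhds z hr, ?_⟩
  rw [zeroMeasure_congr_set measurableSet_ball (measurableSet_singleton z) fun w hw =>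
    ⟨fun h => hb w h hw, fun h => by rw [Set.mem_singleton_iff.mp h]; exact mem_ball_self hr⟩,
    zeroMeasure_singleton]
  exact ENNReal.natCast_lt_top _

lemma zeroMeasure_sub_mul {f : ℂ → ℂ} (hf : Differentiable ℂ f) (h0 : f ≠ 0) (a : ℂ) :
    zeroMeasure (fun z => (z - a) * f z) = Measure.dirac a + zeroMeasure f := by
  have hd : Differentiable ℂ (fun z => (z - a) * f z) := by fun_prop
  have hl : Differentiable ℂ (fun z : ℂ => z - a) := by fun_prop
  have hl0 : (fun z : ℂ => z - a) ≠ 0 := fun h => by simpa using congrFun h (a + 1)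
  have hne : (fun z => (z - a) * f z) ≠ 0 := by
    intro h
    refine hf.analyticOrderAt_ne_top h0 a ?_
    have h1 : analyticOrderAt ((fun z : ℂ => z - a) * f) a = ⊤ := by
      rw [show ((fun z : ℂ => z - a) * f) = 0 from h]
      exact analyticOrderAt_eq_top.mpr (by simp)
    rw [analyticOrderAt_mul (hl.analyticAt a) (hf.analyticAt a)] at h1
    exact (WithTop.add_eq_top.mp h1).resolve_left (hl.analyticOrderAt_ne_top hl0 a)
  have key : ∀ z, zeroMult (fun z => (z - a) * f z) z = (if z = a then 1 else 0) + zeroMult f z := by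
    intro z
    rw [zeroMult_eq_analyticOrderNatAt hd hne, zeroMult_eq_analyticOrderNatAt hf h0,
      show (fun z => (z - a) * f z) = (fun z => z - a) * f from rfl,
      analyticOrderNatAt_mul (hl.analyticAt z) (hf.analyticAt z)
        (hl.analyticOrderAt_ne_top hl0 z) (hf.analyticOrderAt_ne_top h0 z)]
    congr 1
    split_ifs with hz
    · subst hz
      have h1 : analyticOrderAt (fun w : ℂ => w - z) z = 1 :=
        analyticAt_id.analyticOrderAt_sub_eq_one_of_deriv_ne_zero (by simp)
      simp [analyticOrderNatAt, h1]
    · have h1 : analyticOrderAt (fun w : ℂ => w - a) z = 0 :=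
        (hl.analyticAt z).analyticOrderAt_eq_zero.mpr (sub_ne_zero.mpr hz)
      simp [analyticOrderNatAt, h1]
  ext s hs
  rw [Measure.add_apply, zeroMeasure_apply _ hs, zeroMeasure_apply _ hs,
    Measure.dirac_apply' _ hs]
  simp_rw [key, Nat.cast_add, add_mul]
  rw [ENNReal.tsum_add, tsum_eq_single a]
  · simp
  · intro z hz
    simp [hz]

/-- The **argument principle** on a disc, for entire functions. -/
lemma exists_zeroMeasure_ball_eq_and_circleIntegral_logDeriv {f : ℂ → ℂ}
    (hf : Differentiable ℂ f) {c : ℂ} {r : ℝ} (hr : 0 < r) (hs : ∀ z ∈ sphere c r, f z ≠ 0) :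
    ∃ N : ℕ, zeroMeasure f (ball c r) = N ∧
      circleIntegral (logDeriv f) c r = 2 * Real.pi * Complex.I * N := by
  have hne : ∀ {f : ℂ → ℂ}, (∀ z ∈ sphere c r, f z ≠ 0) → f ≠ 0 := by
    rintro f hs rfl
    obtain ⟨z, hz⟩ := NormedSpace.sphere_nonempty (x := c) (r := r) |>.mpr hr.le
    exact hs z hz rfl
  have hcont : ∀ {f : ℂ → ℂ}, Differentiable ℂ f → (∀ z ∈ sphere c r, f z ≠ 0) →
      CircleIntegrable (logDeriv f) c r := by
    intro f hf hs
    refine ContinuousOn.circleIntegrable hr.le ?_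
    exact (hf.contDiff (n := 1)).continuous_deriv_one.continuousOn.div hf.continuous.continuousOn hs
  have hfin : zeroMeasure f (ball c r) < ⊤ := by
    have := isLocallyFiniteMeasure_zeroMeasure hf (hne hs)
    exact measure_ball_lt_top
  obtain ⟨n, hn⟩ := ENNReal.exists_nat_gt hfin.ne
  clear hfin
  induction n generalizing f with
  | zero => simp at hn
  | succ n ih =>
    by_cases hz : ∃ a ∈ ball c r, f a = 0
    · obtain ⟨a, ha, hfa⟩ := hz
      set h := dslope f a
      have hfh : f = fun z => (z - a) * h z := by
        ext z
        have := sub_smul_dslope f a z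
        simp only [smul_eq_mul, hfa, sub_zero] at this
        exact this.symm
      have hd : Differentiable ℂ h := by
        rw [← differentiableOn_univ] at hf ⊢
        exact (Complex.differentiableOn_dslope univ_mem).mpr hf
      have hs' : ∀ z ∈ sphere c r, h z ≠ 0 := by
        intro z hz h0
        apply hs z hz
        rw [hfh]
        simp [h0]
      have hμ : zeroMeasure f (ball c r) = 1 + zeroMeasure h (ball c r) := by
        conv_lhs => rw [hfh]
        rw [zeroMeasure_sub_mul hd (hne hs'), Measure.add_apply,
          Measure.dirac_apply' _ measurableSet_ball]
        simp [Set.indicator, mem_ball.mp ha]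
      obtain ⟨N, hN, hI⟩ := ih hd hs' (by
        rw [hμ, Nat.cast_add, Nat.cast_one, add_comm] at hn
        exact lt_of_add_lt_add_right hn)
      refine ⟨N + 1, by rw [hμ, hN]; push_cast; ring, ?_⟩
      have hza : ∀ z ∈ sphere c r, z - a ≠ 0 := fun z hz =>
        sub_ne_zero.mpr (sphere_disjoint_ball.ne_of_mem hz ha)
      have heq : circleIntegral (logDeriv f) c r =
          circleIntegral (fun z => (z - a)⁻¹ + logDeriv h z) c r := by
        refine circleIntegral.integral_congr hr.le fun z hz => ?_
        conv_lhs => rw [hfh]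
        rw [logDeriv_mul z (hza z hz) (hs' z hz) (by fun_prop) (hd z)]
        simp [logDeriv_apply]
      rw [heq, circleIntegral.integral_add _ (hcont hd hs'),
        circleIntegral.integral_sub_inv_of_mem_ball ha, hI]
      · push_cast; ring
      · exact ContinuousOn.circleIntegrable hr.le
          ((continuous_id.sub continuous_const).continuousOn.inv₀ hza)
    · push Not at hz
      refine ⟨0, ?_, ?_⟩
      · rw [zeroMeasure_congr_set measurableSet_ball MeasurableSet.empty fun z h0 => by
          simpa using fun h : z ∈ ball c r => hz z h h0]
        simp
      · have hz' : ∀ z ∈ closedBall c r, f z ≠ 0 := by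
          intro z hzc
          rcases (mem_closedBall.mp hzc).lt_or_eq with h | h
          · exact hz z h
          · exact hs z h
        have hd := hf.contDiff (n := 2) |>.differentiable_deriv_two
        have := Complex.circleIntegral_eq_zero_of_differentiable_on_off_countable
          (f := logDeriv f) hr.le Set.countable_empty
          (hd.continuous.continuousOn.div hf.continuous.continuousOn hz')
          (fun z hz => (hd z).div (hf z) (hz' z (ball_subset_closedBall hz.1)))
        simpa using this

section Convergence

variable {g : ℂ → ℂ} {gs : ℕ → ℂ → ℂ}

lemma TendstoLocallyUniformly.eventually_forall_ne_zero (hconv : TendstoLocallyUniformly gs g atTop)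
    (hg : Continuous g) {K : Set ℂ} (hK : IsCompact K) (h0 : ∀ z ∈ K, g z ≠ 0) :
    ∀ᶠ n in atTop, ∀ z ∈ K, gs n z ≠ 0 := by
  have hu : TendstoUniformlyOn gs g atTop K :=
    (tendstoLocallyUniformlyOn_iff_tendstoUniformlyOn_of_compact hK).mp
      hconv.tendstoLocallyUniformlyOn
  obtain ⟨ε, hε, hb⟩ := hK.exists_forall_le' (f := fun z => ‖g z‖) (by fun_prop)
    (a := 0) fun z hz => norm_pos_iff.mpr (h0 z hz)
  filter_upwards [Metric.tendstoUniformlyOn_iff.mp hu ε hε] with n hn z hz hzero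
  have := hn z hz
  rw [hzero, dist_zero_right] at this
  exact (hb z hz).not_gt this

/-- **Hurwitz's theorem**: the number of zeros in a disc whose boundary contains no zero of the
limit is eventually constant. -/
lemma eventually_zeroMeasure_ball_eq (hg : Differentiable ℂ g) (hgs : ∀ n, Differentiable ℂ (gs n))
    (hconv : TendstoLocallyUniformly gs g atTop) {c : ℂ} {r : ℝ} (hr : 0 < r)
    (hs : ∀ z ∈ sphere c r, g z ≠ 0) :
    ∀ᶠ n in atTop, zeroMeasure (gs n) (ball c r) = zeroMeasure g (ball c r) := by
  have hev := hconv.eventually_forall_ne_zero hg.continuous (isCompact_sphere c r) hs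
  have hcd : ∀ {f : ℂ → ℂ}, Differentiable ℂ f → Continuous (deriv f) := fun hf =>
    (hf.contDiff (n := 1)).continuous_deriv_one
  have hderiv : TendstoLocallyUniformlyOn (fun n => deriv (gs n)) (deriv g) atTop Set.univ :=
    (tendstoLocallyUniformlyOn_univ.mpr hconv).deriv
      (Eventually.of_forall fun n => (hgs n).differentiableOn) isOpen_univ
  have hlog : TendstoUniformlyOn (fun n => logDeriv (gs n)) (logDeriv g) atTop (sphere c r) :=
    (tendstoLocallyUniformlyOn_iff_tendstoUniformlyOn_of_compact (isCompact_sphere c r)).mp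
      ((hderiv.mono (Set.subset_univ _)).div₀ hconv.tendstoLocallyUniformlyOn
        (hcd hg).continuousOn hg.continuous.continuousOn hs)
  have hint := hlog.tendsto_circleIntegral_of_continuousOn hr.le (by
    filter_upwards [hev] with n hn
    exact (hcd (hgs n)).continuousOn.div (hgs n).continuous.continuousOn hn)
  obtain ⟨N, hN, hI⟩ := exists_zeroMeasure_ball_eq_and_circleIntegral_logDeriv hg hr hs
  rw [hI] at hint
  have hpi : (2 * Real.pi * Complex.I : ℂ) ≠ 0 := Complex.two_pi_I_ne_zero
  have hdist := Metric.tendsto_nhds.mp hint ‖(2 * Real.pi * Complex.I : ℂ)‖ (norm_pos_iff.mpr hpi)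
  filter_upwards [hev, hdist] with n hn hd
  obtain ⟨M, hM, hJ⟩ := exists_zeroMeasure_ball_eq_and_circleIntegral_logDeriv (hgs n) hr hn
  rw [hM, hN]
  change dist (circleIntegral (logDeriv (gs n)) c r) _ < _ at hd
  rw [hJ, dist_eq_norm, ← mul_sub, norm_mul, mul_lt_iff_lt_one_right (norm_pos_iff.mpr hpi)] at hd
  have h1 : |(M : ℤ) - N| < 1 := by
    have h2 : ‖(((M : ℤ) - N : ℤ) : ℂ)‖ < 1 := by simpa using hd
    rw [Complex.norm_intCast] at h2
    exact_mod_cast h2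
  have h3 := Int.abs_lt_one_iff.mp h1
  have h4 : M = N := by omega
  rw [h4]

end Convergence

/-- If `φ` is supported in `t` and within `ε` of `a` on a subset `s` of full measure in `t`, then
its integral is within `ε μ(t)` of `a μ(t)`. -/
lemma abs_integral_sub_le_of_measure_eq {μ : Measure ℂ} [IsLocallyFiniteMeasure μ]
    {φ : ℂ → ℝ} (hφ : Continuous φ) (hc : HasCompactSupport φ) {s t : Set ℂ} (hst : s ⊆ t)
    (hs : MeasurableSet s) (hsupp : Function.support φ ⊆ t) (hμ : μ s = μ t) (ht : μ t ≠ ⊤)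
    {a ε : ℝ} (hε : ∀ z ∈ s, |φ z - a| ≤ ε) :
    |∫ z, φ z ∂μ - μ.real t * a| ≤ ε * μ.real t := by
  have hs' : μ s ≠ ⊤ := hμ ▸ ht
  have h1 : ∫ z, φ z ∂μ = ∫ z in s, φ z ∂μ := by
    rw [← setIntegral_eq_integral_of_forall_compl_eq_zero (s := t)
      fun z hz => Function.notMem_support.mp fun h => hz (hsupp h)]
    exact setIntegral_congr_set
      (ae_eq_of_subset_of_measure_ge hst hμ.ge hs.nullMeasurableSet ht).symm
  have h2 : μ.real t = μ.real s := by simp [Measure.real, hμ]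
  have h3 : ∫ z in s, (φ z - a) ∂μ = ∫ z in s, φ z ∂μ - μ.real s * a := by
    rw [integral_sub (hφ.integrable_of_hasCompactSupport hc).integrableOn
      (integrableOn_const hs')]
    simp
  rw [h1, h2, ← h3]
  simpa only [Real.norm_eq_abs] using
    norm_setIntegral_le_of_norm_le_const (f := fun z => φ z - a) hs'.lt_top hε

/-- Vague convergence of zero measures holds locally. -/
lemma exists_ball_tendsto_integral_zeroMeasure {g : ℂ → ℂ} {gs : ℕ → ℂ → ℂ}
    (hg : Differentiable ℂ g) (hg0 : g ≠ 0) (hgs : ∀ n, Differentiable ℂ (gs n))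
    (hne : ∀ᶠ n in atTop, gs n ≠ 0) (hconv : TendstoLocallyUniformly gs g atTop) (c : ℂ) :
    ∃ r > 0, ∀ φ : ℂ → ℝ, Continuous φ → HasCompactSupport φ → Function.support φ ⊆ ball c r →
      Tendsto (fun n => ∫ z, φ z ∂(zeroMeasure (gs n))) atTop
        (𝓝 (∫ z, φ z ∂(zeroMeasure g))) := by
  obtain ⟨R, hR, hz⟩ := hg.exists_ball_zero_eq hg0 c
  have hsphere : ∀ r, 0 < r → r < R → ∀ z ∈ sphere c r, g z ≠ 0 := by
    intro r hr hrR z hzs h0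
    have h1 : dist z c = r := hzs
    rw [hz z (by rw [mem_ball, h1]; exact hrR) h0, dist_self] at h1
    exact hr.ne h1
  refine ⟨R / 2, half_pos hR, fun φ hφ hφc hsupp => ?_⟩
  set t := ball c (R / 2) with ht
  have := isLocallyFiniteMeasure_zeroMeasure hg hg0
  have htfin : zeroMeasure g t ≠ ⊤ := measure_ball_lt_top.ne
  set m := (zeroMeasure g).real t with hm
  have hm0 : 0 ≤ m := measureReal_nonneg
  rw [Metric.tendsto_nhds]
  intro ε hε
  obtain ⟨δ, hδ, hδε⟩ : ∃ δ > 0, δ * m * 2 < ε := by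
    refine ⟨ε / (2 * m + 1), by positivity, ?_⟩
    rw [div_mul_eq_mul_div, div_mul_eq_mul_div, div_lt_iff₀ (by positivity)]
    nlinarith
  obtain ⟨ρ, hρ, hρφ⟩ := Metric.continuous_iff.mp hφ c δ hδ
  set r := min ρ (R / 2) with hr
  have hr0 : 0 < r := lt_min hρ (half_pos hR)
  have hrR : r ≤ R / 2 := min_le_right _ _
  have hst : ball c r ⊆ t := ball_subset_ball hrR
  have hclose : ∀ z ∈ ball c r, |φ z - φ c| ≤ δ := fun z hzr =>
    (hρφ z ((mem_ball.mp hzr).trans_le (min_le_left _ _))).le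
  have hgeq : zeroMeasure g (ball c r) = zeroMeasure g t := by
    refine zeroMeasure_congr_set measurableSet_ball measurableSet_ball fun z h0 =>
      ⟨fun h => hst h, fun h => ?_⟩
    rw [hz z (ball_subset_ball (by linarith) h) h0]
    exact mem_ball_self hr0
  have hlim := abs_integral_sub_le_of_measure_eq hφ hφc hst measurableSet_ball hsupp hgeq htfin
    hclose
  filter_upwards [hne, eventually_zeroMeasure_ball_eq hg hgs hconv hr0
      (hsphere r hr0 (by linarith)), eventually_zeroMeasure_ball_eq hg hgs hconv (half_pos hR)
      (hsphere _ (half_pos hR) (by linarith))] with n hn h1 h2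
  have := isLocallyFiniteMeasure_zeroMeasure (hgs n) hn
  have hnm : (zeroMeasure (gs n)).real t = m := by rw [hm, Measure.real, Measure.real, ht, h2]
  have hseq := abs_integral_sub_le_of_measure_eq (μ := zeroMeasure (gs n)) hφ hφc hst
    measurableSet_ball hsupp (by rw [h1, hgeq, ht, h2]) (by rw [ht, h2]; exact htfin) hclose
  rw [hnm] at hseq
  rw [← hm] at hlim
  rw [Real.dist_eq]
  rw [abs_le] at hlim hseq
  rw [abs_lt]
  constructor <;> linarith [hlim.1, hlim.2, hseq.1, hseq.2]

/-- Hurwitz continuity of zero sets: if `g` is entire and not identically zero, and entire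
functions `gₙ → g` locally uniformly, then the zero counting measures of `gₙ` converge
vaguely to that of `g` (counting multiplicities). -/
theorem zero_counting_measures_tendsto_of_tendstoLocallyUniformly
    (g : ℂ → ℂ) (hg : Differentiable ℂ g) (hg0 : ∃ z, g z ≠ 0)
    (gs : ℕ → ℂ → ℂ) (hgs : ∀ n, Differentiable ℂ (gs n))
    (hconv : TendstoLocallyUniformly gs g atTop) :
    ∀ φ : ℂ → ℝ, Continuous φ → HasCompactSupport φ →
      Tendsto (fun n => ∫ z, φ z ∂(zeroMeasure (gs n))) atTop
        (nhds (∫ z, φ z ∂(zeroMeasure g))) := by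
  intro φ hφ hφc
  obtain ⟨z₀, hz₀⟩ := hg0
  have hg0 : g ≠ 0 := fun h => hz₀ (congrFun h z₀)
  have hne : ∀ᶠ n in atTop, gs n ≠ 0 := by
    filter_upwards [hconv.eventually_forall_ne_zero hg.continuous (isCompact_singleton (x := z₀))
      (by simpa using hz₀)] with n hn h
    exact hn z₀ rfl (congrFun h z₀)
  choose r hr hloc using exists_ball_tendsto_integral_zeroMeasure hg hg0 hgs hne hconv
  obtain ⟨T, -, hT⟩ := hφc.isCompact.elim_nhds_subcover (fun c => ball c (r c))
    fun c _ => ball_mem_nhds c (hr c)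
  obtain ⟨ρ, hρs, hρ1, -, -⟩ := exists_continuous_sum_one_of_isOpen_isCompact
    (s := fun i => ball (T.equivFin.symm i : ℂ) (r (T.equivFin.symm i)))
    (fun _ => isOpen_ball) hφc.isCompact (by
      intro z hz
      obtain ⟨c, hcT, hc⟩ := Set.mem_iUnion₂.mp (hT hz)
      exact Set.mem_iUnion.mpr ⟨T.equivFin ⟨c, hcT⟩, by simpa using hc⟩)
  have hsum : φ = fun z => ∑ i, ρ i z * φ z := by
    ext z
    rw [← Finset.sum_mul]
    by_cases hz : z ∈ tsupport φ
    · have := hρ1 hz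
      simp only [Finset.sum_apply, Pi.one_apply] at this
      rw [this, one_mul]
    · rw [image_eq_zero_of_notMem_tsupport hz, mul_zero]
  have hcont : ∀ i, Continuous fun z => ρ i z * φ z := fun i => (ρ i).continuous.mul hφ
  have hcomp : ∀ i, HasCompactSupport fun z => ρ i z * φ z := fun i => hφc.mul_left
  have hint : ∀ {f : ℂ → ℂ}, Differentiable ℂ f → f ≠ 0 →
      ∫ z, φ z ∂(zeroMeasure f) = ∑ i, ∫ z, ρ i z * φ z ∂(zeroMeasure f) := by
    intro f hf hf0
    have := isLocallyFiniteMeasure_zeroMeasure hf hf0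
    conv_lhs => rw [hsum]
    exact integral_finsetSum _ fun i _ => (hcont i).integrable_of_hasCompactSupport (hcomp i)
  rw [hint hg hg0]
  refine Tendsto.congr' (hne.mono fun n hn => (hint (hgs n) hn).symm)
    (tendsto_finsetSum _ fun i _ => hloc (T.equivFin.symm i) _ (hcont i) (hcomp i) ?_)
  exact (Function.support_mul_subset_left _ _).trans ((subset_tsupport _).trans (hρs i))
end

section
/- Let G be a Gaussian analytic function on ℂ with covariance kernel K(z,w) = ∫₀¹ e^{(z+w̄)t} dt (and vanishing pseudo-covariance). Then almost surely all zeros of G are simple, i.e., G and G' have no common zero. -/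
open MeasureTheory ProbabilityTheory Complex Finset

/-- A centered real Gaussian of variance `v` puts mass at most `2r / √(2πv)` on `[-r, r]`. -/
theorem gaussianReal_Icc_le {v : NNReal} (hv : v ≠ 0) (r : ℝ) :
    gaussianReal 0 v (Set.Icc (-r) r) ≤ ENNReal.ofReal (2 * r * (√(2 * Real.pi * v))⁻¹) := by
  rw [gaussianReal_apply _ hv]
  calc ∫⁻ x in Set.Icc (-r) r, gaussianPDF 0 v x
      ≤ ∫⁻ _ in Set.Icc (-r) r, ENNReal.ofReal (√(2 * Real.pi * v))⁻¹ := by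
        refine lintegral_mono fun x => ENNReal.ofReal_le_ofReal ?_
        rw [gaussianPDFReal]
        refine mul_le_of_le_one_right (by positivity) (Real.exp_le_one_iff.2 ?_)
        rw [neg_div]
        exact neg_nonpos.2 (by positivity)
    _ = ENNReal.ofReal (2 * r * (√(2 * Real.pi * v))⁻¹) := by
        rw [setLIntegral_const, Real.volume_Icc, ← ENNReal.ofReal_mul (by positivity)]
        congr 1
        ring

/-- A random variable with values in `ℂ` all of whose real linear images are Gaussian has a
Gaussian law. -/
theorem hasGaussianLaw_of_re_mul {Ω : Type*} [MeasurableSpace Ω] {P : Measure Ω}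
    {X : Ω → ℂ} (hX : Measurable X)
    (h : ∀ c : ℂ, ∃ v : NNReal, P.map (fun ω => (c * X ω).re) = gaussianReal 0 v) :
    HasGaussianLaw X P where
  isGaussian_map := by
    refine isGaussian_of_map_eq_gaussianReal fun L => ?_
    obtain ⟨v, hv⟩ := h (L 1 - L I * I)
    refine ⟨0, v, ?_⟩
    rw [Measure.map_map (by fun_prop) hX, ← hv]
    congr 1
    ext ω
    have key : X ω = (X ω).re • (1 : ℂ) + (X ω).im • I := by simp
    rw [Function.comp_apply, key, map_add, map_smul, map_smul, ← key]
    simp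
    ring

/-- Small ball estimate for a centered circularly symmetric complex Gaussian of variance `k`. -/
theorem measure_norm_le_of_complex_gaussian {Ω : Type*} [MeasurableSpace Ω] {P : Measure Ω}
    [IsProbabilityMeasure P] {X : Ω → ℂ} (hX : Measurable X)
    (h : ∀ c : ℂ, ∃ v : NNReal, P.map (fun ω => (c * X ω).re) = gaussianReal 0 v)
    (hpseudo : ∫ ω, X ω * X ω ∂P = 0) {k : ℝ} (hk : 0 < k)
    (hcov : ∫ ω, X ω * (starRingEnd ℂ) (X ω) ∂P = k) {r : ℝ} (hr : 0 ≤ r) :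
    P {ω | ‖X ω‖ ≤ r} ≤ ENNReal.ofReal (4 * r ^ 2 / (Real.pi * k)) := by
  have hG := hasGaussianLaw_of_re_mul hX h
  have hre : HasGaussianLaw (fun ω => (X ω).re) P := hG.map_fun reCLM
  have him : HasGaussianLaw (fun ω => (X ω).im) P := hG.map_fun imCLM
  have hpair : HasGaussianLaw (fun ω => ((X ω).re, (X ω).im)) P :=
    hG.map_fun (reCLM.prod imCLM)
  have mre : Measurable fun ω => (X ω).re := by fun_prop
  have mim : Measurable fun ω => (X ω).im := by fun_prop
  obtain ⟨a, ha⟩ := h 1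
  obtain ⟨b, hb⟩ := h (-I)
  replace ha : P.map (fun ω => (X ω).re) = gaussianReal 0 a := by simpa using ha
  replace hb : P.map (fun ω => (X ω).im) = gaussianReal 0 b := by simpa using hb
  have Ere : ∫ ω, (X ω).re ∂P = 0 := by
    rw [← integral_map (φ := fun ω => (X ω).re) (f := fun x => x) mre.aemeasurable (by fun_prop),
      ha, integral_id_gaussianReal]
  have Eim : ∫ ω, (X ω).im ∂P = 0 := by
    rw [← integral_map (φ := fun ω => (X ω).im) (f := fun x => x) mim.aemeasurable (by fun_prop),
      hb, integral_id_gaussianReal]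
  have Vre : ∫ ω, (X ω).re * (X ω).re ∂P = a := by
    have := variance_map (X := id) (Y := fun ω => (X ω).re) (μ := P) (by fun_prop)
      mre.aemeasurable
    rw [ha, variance_id_gaussianReal, Function.id_comp, variance_eq_sub hre.memLp_two, Ere] at this
    simpa [pow_two] using this.symm
  have Vim : ∫ ω, (X ω).im * (X ω).im ∂P = b := by
    have := variance_map (X := id) (Y := fun ω => (X ω).im) (μ := P) (by fun_prop)
      mim.aemeasurable
    rw [hb, variance_id_gaussianReal, Function.id_comp, variance_eq_sub him.memLp_two, Eim] at this
    simpa [pow_two] using this.symm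
  have Irr : Integrable (fun ω => (X ω).re * (X ω).re) P :=
    hre.memLp_two.integrable_mul hre.memLp_two
  have Iii : Integrable (fun ω => (X ω).im * (X ω).im) P :=
    him.memLp_two.integrable_mul him.memLp_two
  have Iri : Integrable (fun ω => (X ω).re * (X ω).im) P :=
    hre.memLp_two.integrable_mul him.memLp_two
  have IXX : Integrable (fun ω => X ω * X ω) P := hG.memLp_two.integrable_mul hG.memLp_two
  have hsum : (a : ℝ) + b = k := by
    rw [← Vre, ← Vim, ← integral_add Irr Iii]
    have : ∀ ω, X ω * (starRingEnd ℂ) (X ω)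
        = (((X ω).re * (X ω).re + (X ω).im * (X ω).im : ℝ) : ℂ) := fun ω => by
      rw [mul_conj, normSq_apply]
    simp_rw [this, integral_complex_ofReal] at hcov
    exact_mod_cast hcov
  have hdiff : (a : ℝ) - b = 0 := by
    have := reCLM.integral_comp_comm IXX
    rw [hpseudo] at this
    simp only [reCLM_apply, mul_re, zero_re] at this
    rwa [integral_sub Irr Iii, Vre, Vim] at this
  have hcross : ∫ ω, (X ω).re * (X ω).im ∂P = 0 := by
    have := imCLM.integral_comp_comm IXX
    rw [hpseudo] at this
    simp only [imCLM_apply, mul_im, zero_im, mul_comm (X _).im, ← two_mul] at this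
    rw [integral_const_mul] at this
    linarith
  have hind : IndepFun (fun ω => (X ω).re) (fun ω => (X ω).im) P := by
    refine hpair.indepFun_of_covariance_eq_zero ?_
    rw [covariance_eq_sub hre.memLp_two him.memLp_two, Ere, Eim]
    simpa using hcross
  have hak : (a : ℝ) = k / 2 := by linarith
  have hbk : (b : ℝ) = k / 2 := by linarith
  have ha0 : a ≠ 0 := fun h0 => by rw [h0, NNReal.coe_zero] at hak; linarith
  have hb0 : b ≠ 0 := fun h0 => by rw [h0, NNReal.coe_zero] at hbk; linarith
  calc P {ω | ‖X ω‖ ≤ r}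
      ≤ P ((fun ω => (X ω).re) ⁻¹' Set.Icc (-r) r ∩ (fun ω => (X ω).im) ⁻¹' Set.Icc (-r) r) :=
        measure_mono fun ω hω => ⟨abs_le.1 ((abs_re_le_norm _).trans hω),
          abs_le.1 ((abs_im_le_norm _).trans hω)⟩
    _ = gaussianReal 0 a (Set.Icc (-r) r) * gaussianReal 0 b (Set.Icc (-r) r) := by
        rw [hind.measure_inter_preimage_eq_mul _ _ measurableSet_Icc measurableSet_Icc, ← ha, ← hb,
          Measure.map_apply mre measurableSet_Icc, Measure.map_apply mim measurableSet_Icc]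
    _ ≤ _ := mul_le_mul' (gaussianReal_Icc_le ha0 r) (gaussianReal_Icc_le hb0 r)
    _ = _ := by
        rw [← ENNReal.ofReal_mul (by positivity), hak, hbk]
        congr 1
        have hs : √(2 * Real.pi * (k / 2)) ^ 2 = Real.pi * k := by
          rw [Real.sq_sqrt (by positivity)]; ring
        rw [← hs]
        field_simp
        ring

/-- The diagonal of the kernel `∫₀¹ e^{(z + conj w)t} dt` is real and bounded below. -/
theorem exists_integral_exp_add_conj_eq (p : ℂ) {R : ℝ} (hp : |p.re| ≤ R) :
    ∃ k : ℝ, Real.exp (-(2 * R)) ≤ k ∧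
      ∫ t in (0:ℝ)..1, Complex.exp ((p + (starRingEnd ℂ) p) * (t : ℂ)) = k := by
  refine ⟨∫ t in (0:ℝ)..1, Real.exp (2 * p.re * t), ?_, ?_⟩
  · have : ∫ _ in (0:ℝ)..1, Real.exp (-(2 * R)) ≤ ∫ t in (0:ℝ)..1, Real.exp (2 * p.re * t) := by
      refine intervalIntegral.integral_mono_on zero_le_one (by simp)
        (Continuous.intervalIntegrable (by fun_prop) _ _) fun t ht => ?_
      rw [Real.exp_le_exp]
      nlinarith [ht.1, ht.2, abs_le.1 hp, abs_nonneg p.re,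
        mul_nonneg ht.1 (by linarith [(abs_le.1 hp).1] : 0 ≤ p.re + R)]
    simpa using this
  · rw [← intervalIntegral.integral_ofReal]
    simp [add_conj]

/-- At a multiple zero a holomorphic function is quadratically small. -/
theorem exists_norm_le_mul_sq_of_double_zero {f : ℂ → ℂ} (hf : Differentiable ℂ f) {z : ℂ}
    (h0 : f z = 0) (h1 : deriv f z = 0) :
    ∃ M : ℕ, 0 < M ∧ ∀ w, ‖w - z‖ ≤ 1 / M → ‖f w‖ ≤ M * ‖w - z‖ ^ 2 := by
  have hd : DifferentiableAt ℂ (dslope f z) z :=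
    ((differentiableOn_dslope Filter.univ_mem).2 hf.differentiableOn).differentiableAt
      Filter.univ_mem
  obtain ⟨C, hC⟩ := hd.isBigO_sub.bound
  obtain ⟨ε, hε, hball⟩ := Metric.eventually_nhds_iff.1 hC
  obtain ⟨M, hM⟩ := exists_nat_gt (max (max C (1 / ε)) 0)
  have hM0 : (0 : ℝ) < M := (le_max_right _ _).trans_lt hM
  have hMC : C < M := (le_max_left _ _).trans_lt ((le_max_left _ _).trans_lt hM)
  have hMε : 1 / ε < M := (le_max_right _ _).trans_lt ((le_max_left _ _).trans_lt hM)
  refine ⟨M, by exact_mod_cast hM0, fun w hw => ?_⟩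
  have hw' := hball (y := w) (by
    rw [dist_eq_norm]
    exact hw.trans_lt (by rwa [one_div_lt hM0 hε]))
  rw [dslope_same, h1, sub_zero] at hw'
  have hfac := sub_smul_dslope f z w
  rw [h0, sub_zero] at hfac
  rw [← hfac, norm_smul]
  nlinarith [norm_nonneg (w - z), mul_le_mul_of_nonneg_left hw' (norm_nonneg (w - z)),
    mul_le_mul_of_nonneg_right hMC.le (sq_nonneg ‖w - z‖)]

/-- The point of the lattice `(1/n) ℤ[i]` with coordinates `q`. -/
noncomputable def latticePoint (n : ℕ) (q : ℤ × ℤ) : ℂ := ⟨q.1 / n, q.2 / n⟩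

theorem exists_latticePoint_near {n R : ℕ} (hn : 0 < n) {z : ℂ} (hz : ‖z‖ ≤ R) :
    ∃ q ∈ Icc (-(n * (R + 1) : ℤ)) (n * (R + 1)) ×ˢ Icc (-(n * (R + 1) : ℤ)) (n * (R + 1)),
      ‖latticePoint n q - z‖ ≤ 1 / n := by
  have hn0 : (0 : ℝ) < n := by exact_mod_cast hn
  have hn1 : (1 : ℝ) ≤ n := by exact_mod_cast hn
  have hround : ∀ x : ℝ, |x| ≤ R →
      round (n * x) ∈ Icc (-(n * (R + 1) : ℤ)) (n * (R + 1)) := fun x hx => by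
    have h := abs_le.1 (abs_sub_round (n * x))
    have h1 := abs_le.1 hx
    rw [Finset.mem_Icc]
    constructor
    · have : (-(n * (R + 1)) : ℝ) ≤ round (n * x) := by nlinarith
      exact_mod_cast this
    · have : (round (n * x) : ℝ) ≤ n * (R + 1) := by nlinarith
      exact_mod_cast this
  have hdist : ∀ x : ℝ, |(round (n * x) : ℝ) / n - x| ≤ 1 / 2 / n := fun x => by
    have h := abs_sub_round (n * x)
    have e : (round (n * x) : ℝ) / n - x = -((n * x - round (n * x)) / n) := by
      field_simp
      ring
    rw [e, abs_neg, abs_div, abs_of_pos hn0]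
    gcongr
  refine ⟨(round (n * z.re), round (n * z.im)), Finset.mem_product.2
    ⟨hround _ ((abs_re_le_norm z).trans hz), hround _ ((abs_im_le_norm z).trans hz)⟩, ?_⟩
  refine (norm_le_abs_re_add_abs_im _).trans ?_
  have h1 := hdist z.re
  have h2 := hdist z.im
  simp only [latticePoint, sub_re, sub_im]
  calc _ ≤ 1 / 2 / (n : ℝ) + 1 / 2 / n := add_le_add h1 h2
    _ = 1 / n := by ring

/-- If `G` is a centered Gaussian analytic function on `ℂ` with vanishing pseudo-covariance
`E[G(z)G(w)] = 0` and covariance kernel `E[G(z) conj(G(w))] = ∫₀¹ e^{(z+conj w)t} dt`, then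
almost surely all zeros of `G` are simple: `G` and `G'` have no common zero. -/
theorem gaf_zeros_are_simple
    {Ω : Type*} [MeasurableSpace Ω] (P : Measure Ω) [IsProbabilityMeasure P]
    (G : Ω → ℂ → ℂ)
    (hmeas : ∀ z, Measurable (fun ω => G ω z))
    (hentire : ∀ᵐ ω ∂P, Differentiable ℂ (G ω))
    -- centered complex Gaussian process: every finite linear functional of `G` is a
    -- centered real Gaussian after taking real parts
    (hgauss : ∀ (m : ℕ) (c zpt : Fin m → ℂ), ∃ v : NNReal,
      P.map (fun ω => (∑ i, c i * G ω (zpt i)).re) = gaussianReal 0 v)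
    -- vanishing pseudo-covariance
    (hpseudo : ∀ z w : ℂ, ∫ ω, G ω z * G ω w ∂P = 0)
    -- covariance kernel `K(z,w) = ∫₀¹ e^{(z + conj w) t} dt`
    (hcov : ∀ z w : ℂ, ∫ ω, G ω z * (starRingEnd ℂ) (G ω w) ∂P
      = ∫ t in (0:ℝ)..1, Complex.exp ((z + (starRingEnd ℂ) w) * (t : ℂ))) :
    ∀ᵐ ω ∂P, ∀ z : ℂ, G ω z = 0 → deriv (G ω) z ≠ 0 := by
  have hsmall : ∀ (p : ℂ) (R r : ℝ), |p.re| ≤ R → 0 ≤ r → P {ω | ‖G ω p‖ ≤ r} ≤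
      ENNReal.ofReal (4 * r ^ 2 / (Real.pi * Real.exp (-(2 * R)))) := by
    intro p R r hp hr
    obtain ⟨k, hk, hint⟩ := exists_integral_exp_add_conj_eq p hp
    refine (measure_norm_le_of_complex_gaussian (hmeas p) (fun c => ?_) (hpseudo p p)
      ((Real.exp_pos _).trans_le hk) ((hcov p p).trans hint) hr).trans
      (ENNReal.ofReal_le_ofReal (by gcongr))
    simpa using hgauss 1 (fun _ => c) (fun _ => p)
  have hnull : ∀ R M : ℕ, 0 < M → P {ω | ∃ z : ℂ, ‖z‖ ≤ R ∧
      ∀ w, ‖w - z‖ ≤ 1 / M → ‖G ω w‖ ≤ M * ‖w - z‖ ^ 2} = 0 := by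
    intro R M hM
    set C : ℝ := 36 * (R + 1) ^ 2 * M ^ 2 / (Real.pi * Real.exp (-(2 * (R + 1)))) with hC
    have hbound : ∀ n : ℕ, M ≤ n → P {ω | ∃ z : ℂ, ‖z‖ ≤ R ∧
        ∀ w, ‖w - z‖ ≤ 1 / M → ‖G ω w‖ ≤ M * ‖w - z‖ ^ 2} ≤ ENNReal.ofReal (C / n ^ 2) := by
      intro n hMn
      have hn : 0 < n := hM.trans_le hMn
      have hn0 : (0 : ℝ) < n := by exact_mod_cast hn
      have hM0 : (0 : ℝ) < M := by exact_mod_cast hM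
      have hn1 : (1 : ℝ) ≤ n := by exact_mod_cast hn
      have hMn' : (M : ℝ) ≤ n := by exact_mod_cast hMn
      set S := Icc (-(n * (R + 1) : ℤ)) (n * (R + 1)) with hS
      have hcard : ((#(S ×ˢ S) : ℕ) : ℝ) ≤ (3 * n * (R + 1)) ^ 2 := by
        have hcS : ((#S : ℕ) : ℝ) = 2 * (n * (R + 1)) + 1 := by
          have : ((#S : ℕ) : ℤ) = 2 * (n * (R + 1)) + 1 := by
            have hpos : (0 : ℤ) ≤ n * (R + 1) := by positivity
            rw [hS, Int.card_Icc, Int.toNat_of_nonneg (by linarith)]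
            ring
          exact_mod_cast this
        rw [Finset.card_product, Nat.cast_mul, hcS, ← pow_two]
        gcongr
        nlinarith [(Nat.cast_nonneg R : (0 : ℝ) ≤ R)]
      calc _ ≤ P (⋃ q ∈ S ×ˢ S, {ω | ‖G ω (latticePoint n q)‖ ≤ M * (1 / n) ^ 2}) := by
            refine measure_mono ?_
            rintro ω ⟨z, hz, hw⟩
            obtain ⟨q, hq, hqz⟩ := exists_latticePoint_near hn hz
            refine Set.mem_biUnion hq ((hw _ (hqz.trans ?_)).trans ?_)
            · gcongr
            · gcongr
        _ ≤ ∑ q ∈ S ×ˢ S, P {ω | ‖G ω (latticePoint n q)‖ ≤ M * (1 / n) ^ 2} :=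
            measure_biUnion_finset_le _ _
        _ ≤ ∑ q ∈ S ×ˢ S, ENNReal.ofReal
            (4 * (M * (1 / n) ^ 2) ^ 2 / (Real.pi * Real.exp (-(2 * (R + 1))))) := by
            refine Finset.sum_le_sum fun q hq => hsmall _ _ _ ?_ (by positivity)
            have hq1 := Finset.mem_Icc.1 (Finset.mem_product.1 hq).1
            have h1 : (-(n * (R + 1)) : ℝ) ≤ q.1 := by exact_mod_cast hq1.1
            have h2 : (q.1 : ℝ) ≤ n * (R + 1) := by exact_mod_cast hq1.2
            simp only [latticePoint]
            rw [abs_div, abs_of_pos hn0, div_le_iff₀ hn0, abs_le]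
            constructor <;> linarith
        _ ≤ ENNReal.ofReal (C / n ^ 2) := by
            rw [Finset.sum_const, nsmul_eq_mul, ← ENNReal.ofReal_natCast,
              ← ENNReal.ofReal_mul (by positivity)]
            refine ENNReal.ofReal_le_ofReal
              ((mul_le_mul_of_nonneg_right hcard (by positivity)).trans_eq ?_)
            rw [hC]
            field_simp
            ring
    have hlim : Filter.Tendsto (fun n : ℕ => ENNReal.ofReal (C / n ^ 2)) Filter.atTop (nhds 0) := by
      rw [← ENNReal.ofReal_zero]
      exact ENNReal.tendsto_ofReal (tendsto_const_div_pow C 2 two_ne_zero)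
    exact le_antisymm (ge_of_tendsto hlim
      (Filter.eventually_atTop.2 ⟨M, hbound⟩)) zero_le
  have hae : ∀ᵐ ω ∂P, ∀ R M : ℕ, 0 < M → ¬ ∃ z : ℂ, ‖z‖ ≤ R ∧
      ∀ w, ‖w - z‖ ≤ 1 / M → ‖G ω w‖ ≤ M * ‖w - z‖ ^ 2 := by
    refine ae_all_iff.2 fun R => ae_all_iff.2 fun M => ?_
    by_cases hM : 0 < M
    · rw [ae_iff]
      simpa [hM] using hnull R M hM
    · exact Filter.Eventually.of_forall fun _ h => absurd h hM
  filter_upwards [hae, hentire] with ω hω hdiff z h0 h1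
  obtain ⟨M, hM, hb⟩ := exists_norm_le_mul_sq_of_double_zero hdiff h0 h1
  obtain ⟨R, hR⟩ := exists_nat_ge ‖z‖
  exact hω R M hM ⟨z, hR, hb⟩
end

section
/- Let Λ be a locally finite simple point configuration in ℂ (no multiplicities), let k ≥ 1, and let Φ : ℂ^k → ℝ be continuous with compact support. Define T_Φ(Λ) = Σ Φ(α₁,…,α_k), the sum over all k-tuples of pairwise distinct points of Λ. Then T_Φ is continuous at Λ with respect to the vague topology on configurations: if Λₙ → Λ vaguely then T_Φ(Λₙ) → T_Φ(Λ). -/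
open MeasureTheory Filter Finset

/-- A point configuration in `ℂ`: a locally finite integer-valued atomic measure. -/
def IsPointConfig (μ : Measure ℂ) : Prop :=
  (∀ K : Set ℂ, IsCompact K → μ K < ⊤) ∧
  ∃ m : ℂ → ℕ, μ = Measure.sum (fun z : ℂ => (m z : ENNReal) • Measure.dirac z)

/-- The `k`-point statistic `T_Φ(Λ) = Σ_{(α₁,…,α_k) pairwise distinct points of Λ}
Φ(α₁,…,α_k)`, summing over ordered `k`-tuples of distinct points (weighted by the product of
multiplicities; these are all `1` for a simple configuration). -/
noncomputable def kPointStat (k : ℕ) (Φ : (Fin k → ℂ) → ℝ) (μ : Measure ℂ) : ℝ :=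
  ∑' p : {p : Fin k → ℂ // Function.Injective p},
    (∏ i, (μ {p.1 i}).toReal) * Φ p.1

theorem IsPointConfig.exists_apply_eq_tsum {μ : Measure ℂ} (h : IsPointConfig μ) :
    ∃ m : ℂ → ℕ, (∀ z, μ {z} = m z) ∧
      ∀ A, MeasurableSet A → μ A = ∑' z, A.indicator (fun z => (m z : ENNReal)) z := by
  obtain ⟨-, m, rfl⟩ := h
  have key : ∀ A, MeasurableSet A →
      (Measure.sum fun z : ℂ => (m z : ENNReal) • Measure.dirac z) A =
        ∑' z, A.indicator (fun z => (m z : ENNReal)) z := by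
    intro A hA
    rw [Measure.sum_apply _ hA]
    refine tsum_congr fun z => ?_
    by_cases hz : z ∈ A <;> simp [Measure.dirac_apply' _ hA, hz]
  refine ⟨m, fun z => ?_, key⟩
  rw [key _ (measurableSet_singleton z), tsum_eq_single z]
  · simp
  · intro w hw
    simp [hw]

theorem IsPointConfig.isFiniteMeasureOnCompacts {μ : Measure ℂ} (h : IsPointConfig μ) :
    IsFiniteMeasureOnCompacts μ :=
  ⟨fun K hK => h.1 K hK⟩

theorem IsPointConfig.exists_atom {μ : Measure ℂ} (h : IsPointConfig μ) {A : Set ℂ}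
    (hA : MeasurableSet A) (hne : μ A ≠ 0) : ∃ z ∈ A, μ {z} ≠ 0 := by
  obtain ⟨m, hm, hs⟩ := h.exists_apply_eq_tsum
  by_contra! hc
  refine hne ?_
  rw [hs A hA, ENNReal.tsum_eq_zero]
  intro z
  by_cases hz : z ∈ A
  · simpa [hz, hm] using hc z hz
  · simp [hz]

theorem IsPointConfig.one_le_of_ne_zero {μ : Measure ℂ} (h : IsPointConfig μ) {z : ℂ}
    (hz : μ {z} ≠ 0) : 1 ≤ μ {z} := by
  obtain ⟨m, hm, -⟩ := h.exists_apply_eq_tsum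
  rw [hm] at hz ⊢
  exact_mod_cast Nat.one_le_iff_ne_zero.2 (by exact_mod_cast hz)

theorem IsPointConfig.eq_one_of_lt_two {μ : Measure ℂ} (h : IsPointConfig μ) {z : ℂ}
    (hz : μ {z} ≠ 0) (hz2 : μ {z} < 2) : μ {z} = 1 := by
  obtain ⟨m, hm, -⟩ := h.exists_apply_eq_tsum
  rw [hm] at hz hz2 ⊢
  have h0 : m z ≠ 0 := by exact_mod_cast hz
  have h2 : m z < 2 := by exact_mod_cast hz2
  exact_mod_cast (by omega : m z = 1)

theorem IsPointConfig.finite_atoms {μ : Measure ℂ} (h : IsPointConfig μ) {K : Set ℂ}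
    (hK : IsCompact K) : {z | z ∈ K ∧ μ {z} ≠ 0}.Finite := by
  obtain ⟨m, hm, hs⟩ := h.exists_apply_eq_tsum
  have hfin := (h.1 K hK).ne
  rw [hs K hK.measurableSet] at hfin
  refine (ENNReal.finite_const_le_of_tsum_ne_top hfin one_ne_zero).subset ?_
  rintro z ⟨hz, hz0⟩
  simpa [hz, hm] using h.one_le_of_ne_zero hz0

/-- A set of mass less than two contains at most one atom. -/
theorem IsPointConfig.atom_unique {μ : Measure ℂ} (h : IsPointConfig μ) {A : Set ℂ}
    (hA : μ A < 2) {z w : ℂ} (hz : z ∈ A) (hw : w ∈ A) (hz0 : μ {z} ≠ 0) (hw0 : μ {w} ≠ 0) :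
    z = w := by
  by_contra hne
  refine hA.not_ge ?_
  calc (2 : ENNReal) = 1 + 1 := by norm_num
    _ ≤ μ {z} + μ {w} := add_le_add (h.one_le_of_ne_zero hz0) (h.one_le_of_ne_zero hw0)
    _ = μ ({z} ∪ {w}) := (measure_union (by simpa using hne) (measurableSet_singleton w)).symm
    _ ≤ μ A := measure_mono (by rintro x (rfl | rfl) <;> assumption)

section Vague

variable {X : Type*} [MeasurableSpace X] [TopologicalSpace X] [T2Space X] [LocallyCompactSpace X]
  [BorelSpace X] {ι : Type*} {l : Filter ι} {μ : Measure X} {μs : ι → Measure X}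

/-- Vague convergence is upper semicontinuous on compact sets. -/
theorem eventually_measure_lt_of_vague [IsFiniteMeasureOnCompacts μ] [μ.OuterRegular]
    [∀ i, IsFiniteMeasureOnCompacts (μs i)]
    (hv : ∀ f : X → ℝ, Continuous f → HasCompactSupport f →
      Tendsto (fun i => ∫ x, f x ∂(μs i)) l (nhds (∫ x, f x ∂μ)))
    {K : Set X} (hK : IsCompact K) {c : ENNReal} (hc : μ K < c) : ∀ᶠ i in l, μs i K < c := by
  obtain ⟨U, hKU, hU, hUc⟩ := K.exists_isOpen_lt_of_lt c hc
  obtain ⟨f, hf1, hf0, hfc, hf01⟩ := exists_continuous_one_zero_of_isCompact hK hU.isClosed_compl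
    (Set.disjoint_compl_right_iff_subset.2 hKU)
  have hint : ∀ ν : Measure X, IsFiniteMeasureOnCompacts ν → Integrable f ν := fun ν _ =>
    f.continuous.integrable_of_hasCompactSupport hfc
  have hnn : ∀ ν : Measure X, 0 ≤ᵐ[ν] f := fun ν => ae_of_all _ fun x => (hf01 x).1
  have hle : ENNReal.ofReal (∫ x, f x ∂μ) < c := by
    rw [ofReal_integral_eq_lintegral_ofReal (hint μ inferInstance) (hnn μ)]
    refine lt_of_le_of_lt ?_ hUc
    rw [← lintegral_indicator_one hU.measurableSet]
    refine lintegral_mono fun x => ?_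
    by_cases hx : x ∈ U
    · simpa [hx] using (hf01 x).2
    · simp [hx, hf0 (show x ∈ Uᶜ from hx)]
  filter_upwards [((ENNReal.continuous_ofReal.tendsto _).comp
    (hv f f.continuous hfc)).eventually_lt_const hle] with i hi
  refine lt_of_le_of_lt ?_ hi
  simp only [Function.comp]
  rw [ofReal_integral_eq_lintegral_ofReal (hint _ inferInstance) (hnn _),
    ← lintegral_indicator_one hK.measurableSet]
  refine lintegral_mono fun x => ?_
  by_cases hx : x ∈ K
  · simp [hx, hf1 hx]
  · simp [hx]

/-- Under vague convergence, a neighbourhood of an atom of the limit is eventually charged. -/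
theorem eventually_measure_ne_zero_of_vague [IsFiniteMeasureOnCompacts μ]
    (hv : ∀ f : X → ℝ, Continuous f → HasCompactSupport f →
      Tendsto (fun i => ∫ x, f x ∂(μs i)) l (nhds (∫ x, f x ∂μ)))
    {U : Set X} (hU : IsOpen U) {a : X} (ha : a ∈ U) (hμ : μ {a} ≠ 0) :
    ∀ᶠ i in l, μs i U ≠ 0 := by
  obtain ⟨f, hf1, hf0, hfc, hf01⟩ := exists_continuous_one_zero_of_isCompact
    (isCompact_singleton (x := a)) hU.isClosed_compl (by simpa using ha)
  have hpos : 0 < ∫ x, f x ∂μ := by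
    rw [integral_pos_iff_support_of_nonneg (fun x => (hf01 x).1)
      (f.continuous.integrable_of_hasCompactSupport hfc)]
    refine (pos_iff_ne_zero.2 hμ).trans_le (measure_mono ?_)
    rintro x rfl
    simp [hf1 (Set.mem_singleton x)]
  filter_upwards [(hv f f.continuous hfc).eventually_const_lt hpos] with i hi h0
  refine hi.ne' (integral_eq_zero_of_ae ?_)
  filter_upwards [measure_eq_zero_iff_ae_notMem.1 h0] with x hx
  exact hf0 hx

end Vague

/-- If the atoms of `μ` seen by `Φ` are simple and parametrized by a finite type, the `k`-point
statistic is a finite sum. -/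
theorem kPointStat_eq_sum {α : Type*} [Fintype α] {k : ℕ} {Φ : (Fin k → ℂ) → ℝ} {μ : Measure ℂ}
    {φ : α → ℂ} (hφ : Function.Injective φ) (hμ : ∀ a, μ {φ a} = 1)
    (hcov : ∀ p, Φ p ≠ 0 → ∀ i, μ {p i} ≠ 0 → p i ∈ Set.range φ)
    [Fintype {q : Fin k → α // Function.Injective q}] :
    kPointStat k Φ μ = ∑ q : {q : Fin k → α // Function.Injective q}, Φ (φ ∘ q.1) := by
  let g : {q : Fin k → α // Function.Injective q} → {p : Fin k → ℂ // Function.Injective p} :=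
    fun q => ⟨φ ∘ q.1, hφ.comp q.2⟩
  have hg : Function.Injective g := fun q r h =>
    Subtype.ext (hφ.comp_left (congrArg Subtype.val h))
  rw [kPointStat, ← hg.tsum_eq, tsum_fintype]
  · simp [g, hμ]
  · rintro ⟨p, hp⟩ hne
    obtain ⟨h1, h2⟩ := mul_ne_zero_iff.1 (Function.mem_support.1 hne)
    have hp' : ∀ i, ∃ a, φ a = p i := fun i => hcov p h2 i fun h0 =>
      Finset.prod_ne_zero_iff.1 h1 i (mem_univ i) (by simp [h0])
    choose q hq using hp'
    have hqp : φ ∘ q = p := funext hq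
    exact ⟨⟨q, .of_comp (hqp ▸ hp)⟩, Subtype.ext hqp⟩

/-- If `Λ` is a simple locally finite configuration, `k ≥ 1` and `Φ : ℂ^k → ℝ` is continuous
with compact support, then `T_Φ` is continuous at `Λ` for the vague topology: whenever
configurations `Λₙ → Λ` vaguely, `T_Φ(Λₙ) → T_Φ(Λ)`. -/
theorem kPointStat_continuous_at_simple_config
    (Λ : Measure ℂ) (hΛ : IsPointConfig Λ) (hsimple : ∀ z : ℂ, Λ {z} ≤ 1)
    (k : ℕ) (hk : 1 ≤ k)
    (Φ : (Fin k → ℂ) → ℝ) (hΦc : Continuous Φ) (hΦs : HasCompactSupport Φ)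
    (Λs : ℕ → Measure ℂ) (hΛs : ∀ n, IsPointConfig (Λs n))
    (hvague : ∀ f : ℂ → ℝ, Continuous f → HasCompactSupport f →
      Tendsto (fun n => ∫ z, f z ∂(Λs n)) atTop (nhds (∫ z, f z ∂Λ))) :
    Tendsto (fun n => kPointStat k Φ (Λs n)) atTop (nhds (kPointStat k Φ Λ)) := by
  classical
  have := hΛ.isFiniteMeasureOnCompacts
  have := fun n => (hΛs n).isFiniteMeasureOnCompacts
  obtain ⟨R, hR⟩ := hΦs.isBounded.subset_closedBall 0
  have hsupp : ∀ p, Φ p ≠ 0 → ∀ i, p i ∈ Metric.closedBall (0 : ℂ) R := by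
    intro p hp i
    have := hR (subset_tsupport Φ hp)
    rw [mem_closedBall_zero_iff] at this ⊢
    exact (norm_le_pi_norm p i).trans this
  have hK : IsCompact (Metric.closedBall (0 : ℂ) R) := isCompact_closedBall 0 R
  set F : Set ℂ := {z | z ∈ Metric.closedBall (0 : ℂ) R ∧ Λ {z} ≠ 0} with hF
  have : Fintype F := (hΛ.finite_atoms hK).fintype
  have hball : ∀ a : F, ∃ δ > 0, Λ (Metric.closedBall (a : ℂ) δ) < 2 := by
    intro a
    obtain ⟨U, haU, hU, hU2⟩ := Set.exists_isOpen_lt_of_lt {(a : ℂ)} 2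
      ((hsimple a).trans_lt (by norm_num))
    obtain ⟨δ, hδ, hδU⟩ := Metric.nhds_basis_closedBall.mem_iff.1
      (hU.mem_nhds (haU (Set.mem_singleton _)))
    exact ⟨δ, hδ, (measure_mono hδU).trans_lt hU2⟩
  choose δ hδ hδ2 using hball
  let C : Set ℂ := Metric.closedBall 0 R \ ⋃ a : F, Metric.ball (a : ℂ) (δ a)
  have hC : IsCompact C := hK.diff (isOpen_iUnion fun a => Metric.isOpen_ball)
  have hΛC : Λ C < 1 := by
    have : Λ C = 0 := by
      by_contra h0
      obtain ⟨z, hz, hz0⟩ := hΛ.exists_atom hC.measurableSet h0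
      exact hz.2 (Set.mem_iUnion.2 ⟨⟨z, hz.1, hz0⟩, Metric.mem_ball_self (hδ _)⟩)
    simp [this]
  have hexists : ∀ n (a : F), ∃ z, (∃ w ∈ Metric.closedBall (a : ℂ) (δ a), Λs n {w} ≠ 0) →
      z ∈ Metric.closedBall (a : ℂ) (δ a) ∧ Λs n {z} ≠ 0 := by
    intro n a
    by_cases h : ∃ w ∈ Metric.closedBall (a : ℂ) (δ a), Λs n {w} ≠ 0
    · exact h.imp fun w hw _ => hw
    · exact ⟨a, fun h' => (h h').elim⟩
  choose φ hφ using hexists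
  have hmass : ∀ᶠ n in atTop, ∀ a : F, Λs n (Metric.closedBall (a : ℂ) (δ a)) < 2 :=
    eventually_all.2 fun a =>
      eventually_measure_lt_of_vague hvague (isCompact_closedBall _ _) (hδ2 a)
  have hnear : ∀ (a : F) (ε : ℝ), 0 < ε → ∀ᶠ n in atTop,
      ∃ z ∈ Metric.ball (a : ℂ) (min ε (δ a)), Λs n {z} ≠ 0 := by
    intro a ε hε
    filter_upwards [eventually_measure_ne_zero_of_vague hvague Metric.isOpen_ball
      (Metric.mem_ball_self (lt_min hε (hδ a))) a.2.2] with n hn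
    exact (hΛs n).exists_atom Metric.isOpen_ball.measurableSet hn
  have huniq : ∀ n, (∀ a : F, Λs n (Metric.closedBall (a : ℂ) (δ a)) < 2) →
      ∀ (a : F), ∀ z ∈ Metric.ball (a : ℂ) (δ a), Λs n {z} ≠ 0 → φ n a = z := by
    intro n hn a z hz hz0
    have hz' := Metric.ball_subset_closedBall hz
    have := hφ n a ⟨z, hz', hz0⟩
    exact (hΛs n).atom_unique (hn a) this.1 hz' this.2 hz0
  have hlim : ∀ a : F, Tendsto (fun n => φ n a) atTop (nhds (a : ℂ)) := by
    intro a
    refine Metric.tendsto_nhds.2 fun ε hε => ?_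
    filter_upwards [hmass, hnear a ε hε] with n hn ⟨z, hz, hz0⟩
    rw [huniq n hn a z (Metric.ball_subset_ball (min_le_right _ _) hz) hz0]
    exact Metric.ball_subset_ball (min_le_left _ _) hz
  have hone : ∀ᶠ n in atTop, ∀ a : F, Λs n {φ n a} = 1 := by
    filter_upwards [hmass, eventually_all.2 fun a => hnear a 1 one_pos] with n hn hn' a
    obtain ⟨z, hz, hz0⟩ := hn' a
    have hz' := Metric.ball_subset_ball (min_le_right _ _) hz
    rw [huniq n hn a z hz' hz0]
    refine (hΛs n).eq_one_of_lt_two hz0 ((measure_mono ?_).trans_lt (hn a))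
    exact Set.singleton_subset_iff.2 (Metric.ball_subset_closedBall hz')
  have hinj : ∀ᶠ n in atTop, Function.Injective (φ n) := by
    have : ∀ᶠ n in atTop, ∀ a b : F, a ≠ b → φ n a ≠ φ n b :=
      eventually_all.2 fun a => eventually_all.2 fun b => eventually_imp_distrib_left.2 fun hab =>
        (((hlim a).prodMk_nhds (hlim b)).eventually_mem
          (isClosed_diagonal.isOpen_compl.mem_nhds (Subtype.coe_injective.ne hab)))
    filter_upwards [this] with n hn a b hab
    by_contra hne
    exact hn a b hne hab
  have hlimit : kPointStat k Φ Λ =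
      ∑ q : {q : Fin k → F // Function.Injective q}, Φ (Subtype.val ∘ q.1) :=
    kPointStat_eq_sum Subtype.coe_injective
      (fun a => le_antisymm (hsimple a) (hΛ.one_le_of_ne_zero a.2.2))
      fun p hp i hi => ⟨⟨p i, hsupp p hp i, hi⟩, rfl⟩
  have hseq : ∀ᶠ n in atTop, kPointStat k Φ (Λs n) =
      ∑ q : {q : Fin k → F // Function.Injective q}, Φ (φ n ∘ q.1) := by
    filter_upwards [hmass, hone, hinj, eventually_measure_lt_of_vague hvague hC hΛC]
      with n hn hn1 hni hnC
    refine kPointStat_eq_sum hni hn1 fun p hp i hi => ?_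
    by_cases hpi : p i ∈ ⋃ a : F, Metric.ball (a : ℂ) (δ a)
    · obtain ⟨a, ha⟩ := Set.mem_iUnion.1 hpi
      exact ⟨a, huniq n hn a _ ha hi⟩
    · refine absurd hnC (not_lt.2 (((hΛs n).one_le_of_ne_zero hi).trans (measure_mono ?_)))
      exact Set.singleton_subset_iff.2 ⟨hsupp p hp i, hpi⟩
  rw [hlimit, tendsto_congr' hseq]
  refine tendsto_finsetSum _ fun q _ => (hΦc.tendsto _).comp ?_
  exact tendsto_pi_nhds.2 fun i => hlim (q.1 i)
end
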